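/- For k ≥ i ≥ 1, the exponential generating function D_{(i,k)}(t) = ∑_{j≥0} d_{(i,j,k)} t^j/j! equals (-t)^k/(1-e^t)^i, i.e., (-1)^{k-i} t^{k-i} (t/(e^t-1))^i, as formal power series. -/

import Mathlib

open Finset PowerSeries

/-- The sequence d_{(i,j,k)}: d_{(1,j,k)} = 0 if k > 1+j,
d_{(1,j,k)} = (-1)^j j! (-1)^{j+1-k} B_{j+1-k}/(j+1-k)! if k ≤ 1+j, and
d_{(i,j,k)} = -(1/(j+1)) ∑_{m=0}^j C(j+1,m) B_m d_{(i-1,j+1-m,k)} for i ≥ 2.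
(The value at i = 0 is irrelevant and set to 0.) -/
def suzukiD (k : ℕ) : ℕ → ℕ → ℚ
  | 0, _ => 0
  | 1, j => if 1 + j < k then 0
      else (-1) ^ j * j.factorial *
        ((-1) ^ (j + 1 - k) * bernoulli (j + 1 - k) / (j + 1 - k).factorial)
  | (i + 2), j =>
      -(1 / (j + 1 : ℚ)) *
        ∑ m ∈ Finset.range (j + 1),
          ((j + 1).choose m : ℚ) * bernoulli m * suzukiD k (i + 1) (j + 1 - m)

/-!
Up to the factor `-1 / t`, the recursion in `i` is a binomial convolution with the Bernoulli
numbers, so `D_{(i+1,k)} = -(B / t) D_{(i,k)}` with `B = t / (e^t - 1)`. The sum lacks the term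
`m = j + 1` of the full convolution, namely `B_{j+1} d_{(i,0,k)}`; this vanishes because
`D_{(i,k)} = (-t)^(k-i) B^i` has no constant term as long as `i < k`.
-/

section ExponentialGeneratingFunction

variable {K : Type*} [Semifield K]

/-- The exponential generating function `∑ aₙ tⁿ / n!` of a sequence `a`, the form in which the
numbers `d_{(i,j,k)}` are encoded as `D_{(i,k)}`. -/
def egf (a : ℕ → K) : PowerSeries K :=
  PowerSeries.mk fun n => a n / n.factorial

lemma coeff_egf (a : ℕ → K) (n : ℕ) : coeff n (egf a) = a n / n.factorial :=
  coeff_mk _ _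

lemma constantCoeff_egf (a : ℕ → K) : constantCoeff (egf a) = a 0 := by
  rw [← coeff_zero_eq_constantCoeff_apply, coeff_egf, Nat.factorial_zero, Nat.cast_one, div_one]

lemma egf_const_mul (c : K) (a : ℕ → K) : egf (fun n => c * a n) = C c * egf a := by
  ext n
  rw [coeff_C_mul, coeff_egf, coeff_egf, mul_div_assoc]

lemma egf_neg {L : Type*} [Field L] (a : ℕ → L) : egf (fun n => -a n) = -egf a := by
  simpa only [neg_one_mul, map_neg, map_one] using egf_const_mul (-1) a

variable [CharZero K]

lemma egf_mul_egf (a b : ℕ → K) :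
    egf a * egf b = egf fun n => ∑ m ∈ range (n + 1), n.choose m * a m * b (n - m) := by
  ext n
  rw [coeff_mul, Nat.sum_antidiagonal_eq_sum_range_succ_mk, coeff_egf, sum_div]
  refine sum_congr rfl fun m hm => ?_
  rw [coeff_egf, coeff_egf, Nat.cast_choose K (mem_range_succ_iff.mp hm)]
  have hn : (n.factorial : K) ≠ 0 := Nat.cast_ne_zero.mpr n.factorial_ne_zero
  field_simp

lemma X_pow_mul_egf (n : ℕ) (a : ℕ → K) :
    X ^ n * egf a = egf fun j => j.descFactorial n * a (j - n) := by
  ext j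
  rw [coeff_X_pow_mul']
  split_ifs with h
  · have hj : (j.descFactorial n : K) ≠ 0 :=
      Nat.cast_ne_zero.mpr fun h0 => h.not_gt (Nat.descFactorial_eq_zero_iff_lt.mp h0)
    rw [coeff_egf, coeff_egf, ← Nat.factorial_mul_descFactorial h, Nat.cast_mul,
      mul_comm (Nat.cast _) (a _), mul_div_mul_right _ _ hj]
  · rw [coeff_egf, Nat.descFactorial_of_lt (not_le.mp h), Nat.cast_zero, zero_mul, zero_div]

lemma X_mul_egf (a : ℕ → K) : X * egf a = egf fun j => j * a (j - 1) := by
  simpa only [pow_one, Nat.descFactorial_one] using X_pow_mul_egf 1 a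

end ExponentialGeneratingFunction

lemma egf_bernoulli : egf bernoulli = bernoulliPowerSeries ℚ := rfl

lemma bernoulliPowerSeries_mul_one_sub_exp (A : Type*) [CommRing A] [Algebra ℚ A] :
    bernoulliPowerSeries A * (1 - exp A) = -X := by
  rw [← neg_sub, mul_neg, bernoulliPowerSeries_mul_exp_sub_one]

lemma suzukiD_one (n j : ℕ) :
    suzukiD (n + 1) 1 j = (-1) ^ n * (j.descFactorial n * bernoulli (j - n)) := by
  rw [suzukiD, Nat.add_sub_add_right]
  rcases lt_or_ge j n with h | h
  · rw [if_pos (by omega), Nat.descFactorial_of_lt h, Nat.cast_zero, zero_mul, mul_zero]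
  · have hsign : (-1 : ℚ) ^ j * (-1) ^ (j - n) = (-1) ^ n := by
      rw [← pow_add]
      exact neg_one_pow_congr (by grind)
    rw [if_neg (by omega), ← Nat.factorial_mul_descFactorial h, Nat.cast_mul, ← hsign]
    field_simp

lemma egf_suzukiD_one (n : ℕ) :
    egf (suzukiD (n + 1) 1) = (-X) ^ n * bernoulliPowerSeries ℚ := by
  rw [funext (suzukiD_one n), egf_const_mul, ← X_pow_mul_egf, egf_bernoulli, map_pow, map_neg,
    map_one, ← mul_assoc, ← neg_pow]

lemma mul_suzukiD_add_two {k i : ℕ} (h0 : suzukiD k (i + 1) 0 = 0) (j : ℕ) :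
    j * suzukiD k (i + 2) (j - 1) =
      -∑ m ∈ range (j + 1), j.choose m * bernoulli m * suzukiD k (i + 1) (j - m) := by
  cases j with
  | zero => simp [h0]
  | succ j =>
    rw [sum_range_succ, Nat.sub_self, h0, mul_zero, add_zero, Nat.add_sub_cancel, suzukiD]
    push_cast
    field_simp

lemma X_mul_egf_suzukiD_add_two {k i : ℕ} (h0 : suzukiD k (i + 1) 0 = 0) :
    X * egf (suzukiD k (i + 2)) = -(bernoulliPowerSeries ℚ * egf (suzukiD k (i + 1))) := by
  rw [X_mul_egf, funext (mul_suzukiD_add_two h0), egf_neg, ← egf_mul_egf, egf_bernoulli]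

lemma egf_suzukiD (n i : ℕ) :
    egf (suzukiD (n + (i + 1)) (i + 1)) = (-X) ^ n * bernoulliPowerSeries ℚ ^ (i + 1) := by
  induction i generalizing n with
  | zero => rw [zero_add, pow_one, egf_suzukiD_one]
  | succ i ih =>
    have hprev : egf (suzukiD (n + (i + 2)) (i + 1)) =
        (-X) ^ (n + 1) * bernoulliPowerSeries ℚ ^ (i + 1) := by
      rw [← ih, add_right_comm n 1, add_assoc]
    have h0 : suzukiD (n + (i + 2)) (i + 1) 0 = 0 := by
      simp [← constantCoeff_egf, hprev]
    refine mul_left_cancel₀ X_ne_zero ?_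
    calc X * egf (suzukiD (n + (i + 2)) (i + 2))
        = -(bernoulliPowerSeries ℚ * ((-X) ^ (n + 1) * bernoulliPowerSeries ℚ ^ (i + 1))) := by
          rw [X_mul_egf_suzukiD_add_two h0, hprev]
      _ = X * ((-X) ^ n * bernoulliPowerSeries ℚ ^ (i + 2)) := by ring

/-- for k ≥ i ≥ 1, D_{(i,k)}(t) = ∑_{j≥0} d_{(i,j,k)} t^j/j! equals
(-t)^k/(1-e^t)^i, i.e. D_{(i,k)}(t)·(1-e^t)^i = (-t)^k as formal power series. -/
theorem stmt7 (k i : ℕ) (hi : 1 ≤ i) (hik : i ≤ k) :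
    (PowerSeries.mk fun j => suzukiD k i j / j.factorial) * (1 - PowerSeries.exp ℚ) ^ i =
      (-(PowerSeries.X : PowerSeries ℚ)) ^ k := by
  obtain ⟨i, rfl⟩ := Nat.exists_eq_add_of_le' hi
  obtain ⟨n, rfl⟩ := Nat.exists_eq_add_of_le' hik
  calc egf (suzukiD (n + (i + 1)) (i + 1)) * (1 - exp ℚ) ^ (i + 1)
      = (-X) ^ n * (bernoulliPowerSeries ℚ * (1 - exp ℚ)) ^ (i + 1) := by
        rw [egf_suzukiD, mul_assoc, mul_pow]
    _ = (-X) ^ (n + (i + 1)) := by rw [bernoulliPowerSeries_mul_one_sub_exp, ← pow_add]
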